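/- For every n ∈ ℕ and every real z, ∫_{−1}^{1} P_n(x) · e^{izx} dx = 2 · i^n · j_n(z), where P_n is the n-th Legendre polynomial and j_n is the n-th spherical Bessel function of the first kind. -/

import Mathlib

/-!
Integrating by parts `n` times against the Rodrigues formula moves all derivatives onto the
exponential: every boundary term vanishes because `(x² - 1)^(n - j)` divides the `j`-th derivative
of `(x² - 1)^n`. Hence
`∫ P_n(x) e^{izx} dx = (iz)^n / (2^n n!) · ∫ (1 - x²)^n e^{izx} dx` over `[-1, 1]`
(`integral_iterate_derivative_mul_exp`), which is Poisson's integral for the Bessel function.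

Since `(1 - x²)^n` is even, the exponential may be replaced by `cos (z x)`, and the cosine series
can be integrated termwise by dominated convergence. The moments `∫ (1 - x²)^n x^{2k} dx` are
Beta integrals with value `(2k)! √π n! / (4^k k! Γ(n + k + 3/2))` (`integral_weight_mul_pow`),
and inserting them gives the Bessel series term by term.
-/

open Real intervalIntegral

/-- The `n`-th Legendre polynomial, via the Rodrigues formula
`P_n(x) = (1/(2^n n!)) (d/dx)^n (x² − 1)^n`. -/
noncomputable def legendreP (n : ℕ) (x : ℝ) : ℝ :=
  (1 / ((2 : ℝ) ^ n * n.factorial)) * iteratedDeriv n (fun y : ℝ => (y ^ 2 - 1) ^ n) x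

/-- The spherical Bessel function of the first kind, defined by its absolutely
convergent power series
`j_n(z) = Σ_{k=0}^∞ (−1)^k (√π/2) (z/2)^{n+2k} / (k! Γ(n+k+3/2))`. -/
noncomputable def sphericalBessel (n : ℕ) (z : ℝ) : ℝ :=
  ∑' k : ℕ, (-1 : ℝ) ^ k * (Real.sqrt π / 2) * (z / 2) ^ (n + 2 * k) /
    ((k.factorial : ℝ) * Real.Gamma ((n : ℝ) + (k : ℝ) + 3 / 2))

open Polynomial in
lemma iteratedDeriv_polynomial_eval (Q : ℝ[X]) (n : ℕ) :
    iteratedDeriv n (fun y => Q.eval y) = fun y => (derivative^[n] Q).eval y := by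
  induction n with
  | zero => simp
  | succ n ih =>
    rw [iteratedDeriv_succ, ih, Function.iterate_succ_apply']
    funext x
    exact Polynomial.deriv _

open Polynomial in
/-- The boundary terms in the repeated integration by parts vanish. -/
lemma eval_iterate_derivative_eq_zero {n j : ℕ} (hj : j < n) {a : ℝ} (ha : a ^ 2 = 1) :
    (derivative^[j] ((X ^ 2 - 1 : ℝ[X]) ^ n)).eval a = 0 := by
  obtain ⟨R, hR⟩ := pow_sub_dvd_iterate_derivative_pow (X ^ 2 - 1 : ℝ[X]) n j
  rw [hR]
  have : n - j ≠ 0 := by omega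
  simp [ha, this]

open Polynomial in
lemma integral_iterate_derivative_mul_exp (n : ℕ) (z : ℝ) {j : ℕ} (hj : j ≤ n) :
    (∫ x : ℝ in (-1 : ℝ)..1, (((derivative^[j] ((X ^ 2 - 1 : ℝ[X]) ^ n)).eval x : ℝ) : ℂ) *
        Complex.exp (Complex.I * z * x)) =
      (-(Complex.I * z)) ^ j *
        ∫ x : ℝ in (-1 : ℝ)..1, (((x ^ 2 - 1) ^ n : ℝ) : ℂ) * Complex.exp (Complex.I * z * x) := by
  induction j with
  | zero => simp
  | succ j ih =>
    rw [pow_succ' (-(Complex.I * (z : ℂ))), mul_assoc, ← ih (by omega), Function.iterate_succ_apply']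
    set Q := derivative^[j] ((X ^ 2 - 1 : ℝ[X]) ^ n) with hQ
    have hu : ∀ x : ℝ, HasDerivAt (fun x : ℝ => ((Q.eval x : ℝ) : ℂ))
        (((derivative Q).eval x : ℝ) : ℂ) x := fun x => (Q.hasDerivAt x).ofReal_comp
    have hv : ∀ x : ℝ, HasDerivAt (fun x : ℝ => Complex.exp (Complex.I * z * x))
        (Complex.I * z * Complex.exp (Complex.I * z * x)) x := by
      intro x
      have h := ((Complex.ofRealCLM.hasDerivAt (x := x)).const_mul (Complex.I * z)).cexp
      simpa [mul_comm, mul_left_comm, mul_assoc] using h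
    have key := integral_mul_deriv_eq_deriv_mul (a := (-1 : ℝ)) (b := 1)
      (fun x _ => hu x) (fun x _ => hv x)
      (Continuous.intervalIntegrable
        (Complex.continuous_ofReal.comp (derivative Q).continuous) _ _)
      (Continuous.intervalIntegrable (by fun_prop) _ _)
    rw [eval_iterate_derivative_eq_zero (by omega) (by norm_num),
      eval_iterate_derivative_eq_zero (by omega) (by norm_num)] at key
    have h2 : (∫ x : ℝ in (-1 : ℝ)..1, ((Q.eval x : ℝ) : ℂ) *
        (Complex.I * z * Complex.exp (Complex.I * z * x))) = Complex.I * z *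
        ∫ x : ℝ in (-1 : ℝ)..1, ((Q.eval x : ℝ) : ℂ) * Complex.exp (Complex.I * z * x) := by
      rw [← intervalIntegral.integral_const_mul]
      congr 1
      funext x
      ring
    rw [h2] at key
    simp only [Complex.ofReal_zero, zero_mul, sub_zero] at key
    linear_combination key

/-- A half-integer Gamma value, in the form in which it cancels against the factorials of the
cosine series. -/
lemma Gamma_nat_add_three_halves (k : ℕ) :
    Real.Gamma ((k : ℝ) + 3 / 2) =
      (2 * k + 1) * (2 * k).factorial * √π / (2 * 4 ^ k * k.factorial) := by
  induction k with
  | zero =>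
    have h : ((0 : ℕ) : ℝ) + 3 / 2 = 1 / 2 + 1 := by norm_num
    rw [h, Real.Gamma_add_one (by norm_num), Real.Gamma_one_half_eq]
    simp
    ring
  | succ k ih =>
    have h : ((k + 1 : ℕ) : ℝ) + 3 / 2 = ((k : ℝ) + 3 / 2) + 1 := by push_cast; ring
    rw [h, Real.Gamma_add_one (by positivity), ih, show 2 * (k + 1) = 2 * k + 1 + 1 by ring,
      Nat.factorial_succ (2 * k + 1), Nat.factorial_succ (2 * k), Nat.factorial_succ k]
    push_cast
    field_simp
    ring

/-- The even moments of `(1 - x²)^n`. The induction on `n` rests on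
`(1 - x²)^(n+1) x^(2k) = (1 - x²)^n x^(2k) - (1 - x²)^n x^(2(k+1))` and the functional
equation of `Γ`. -/
lemma integral_weight_mul_pow (n k : ℕ) :
    (∫ x : ℝ in (-1 : ℝ)..1, (1 - x ^ 2) ^ n * x ^ (2 * k)) =
      (2 * k).factorial * √π * n.factorial /
        (4 ^ k * k.factorial * Real.Gamma ((n : ℝ) + k + 3 / 2)) := by
  induction n generalizing k with
  | zero =>
    have hodd : (-1 : ℝ) ^ (2 * k + 1) = -1 := by simp [pow_succ, pow_mul]
    have hpi : (0 : ℝ) < √π := Real.sqrt_pos.2 Real.pi_pos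
    simp only [pow_zero, one_mul, integral_pow, hodd, one_pow, Nat.cast_zero, zero_add,
      Gamma_nat_add_three_halves]
    push_cast
    field_simp
    norm_num
  | succ n ih =>
    have hsplit : (∫ x : ℝ in (-1 : ℝ)..1, (1 - x ^ 2) ^ (n + 1) * x ^ (2 * k)) =
        (∫ x : ℝ in (-1 : ℝ)..1, (1 - x ^ 2) ^ n * x ^ (2 * k)) -
        ∫ x : ℝ in (-1 : ℝ)..1, (1 - x ^ 2) ^ n * x ^ (2 * (k + 1)) := by
      rw [← intervalIntegral.integral_sub
        (Continuous.intervalIntegrable (by fun_prop) _ _)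
        (Continuous.intervalIntegrable (by fun_prop) _ _)]
      congr 1
      funext x
      ring
    have hpos : (0 : ℝ) < Real.Gamma ((n : ℝ) + k + 3 / 2) := Real.Gamma_pos_of_pos (by positivity)
    have h1 : (n : ℝ) + (k + 1 : ℕ) + 3 / 2 = ((n : ℝ) + k + 3 / 2) + 1 := by push_cast; ring
    have h2 : ((n + 1 : ℕ) : ℝ) + k + 3 / 2 = ((n : ℝ) + k + 3 / 2) + 1 := by push_cast; ring
    rw [hsplit, ih, ih, h1, h2, Real.Gamma_add_one (by positivity),
      show 2 * (k + 1) = 2 * k + 1 + 1 by ring,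
      Nat.factorial_succ (2 * k + 1), Nat.factorial_succ (2 * k), Nat.factorial_succ k,
      Nat.factorial_succ n]
    push_cast
    field_simp
    ring

lemma integral_weight_mul_exp (n : ℕ) (z : ℝ) :
    (∫ x : ℝ in (-1 : ℝ)..1, (((1 - x ^ 2) ^ n : ℝ) : ℂ) * Complex.exp (Complex.I * z * x)) =
      ((∫ x : ℝ in (-1 : ℝ)..1, (1 - x ^ 2) ^ n * Real.cos (z * x) : ℝ) : ℂ) := by
  -- The integral is unchanged by `x ↦ -x`, so it is the average of the two versions.
  have hneg := intervalIntegral.integral_comp_neg (a := (-1 : ℝ)) (b := 1)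
    (fun x : ℝ => (((1 - x ^ 2) ^ n : ℝ) : ℂ) * Complex.exp (Complex.I * z * x))
  rw [neg_neg] at hneg
  have hsum : (∫ x : ℝ in (-1 : ℝ)..1, (((1 - x ^ 2) ^ n : ℝ) : ℂ) *
        Complex.exp (Complex.I * z * x)) +
      (∫ x : ℝ in (-1 : ℝ)..1, (((1 - (-x) ^ 2) ^ n : ℝ) : ℂ) *
        Complex.exp (Complex.I * z * (-x : ℝ))) =
      2 * ((∫ x : ℝ in (-1 : ℝ)..1, (1 - x ^ 2) ^ n * Real.cos (z * x) : ℝ) : ℂ) := by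
    rw [← intervalIntegral.integral_ofReal, ← intervalIntegral.integral_const_mul,
      ← intervalIntegral.integral_add
        (Continuous.intervalIntegrable (by fun_prop) _ _)
        (Continuous.intervalIntegrable (by fun_prop) _ _)]
    congr 1
    funext x
    push_cast
    rw [Complex.cos, neg_sq,
      show (z : ℂ) * x * Complex.I = Complex.I * z * x by ring,
      show -((z : ℂ) * x) * Complex.I = Complex.I * z * -x by ring]
    ring
  rw [hneg] at hsum
  linear_combination hsum / 2

lemma hasSum_integral_weight_mul_cos (n : ℕ) (z : ℝ) :
    HasSum (fun k : ℕ => (-1 : ℝ) ^ k * z ^ (2 * k) * √π * n.factorial /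
        (4 ^ k * k.factorial * Real.Gamma ((n : ℝ) + k + 3 / 2)))
      (∫ x : ℝ in (-1 : ℝ)..1, (1 - x ^ 2) ^ n * Real.cos (z * x)) := by
  have h : HasSum (fun k : ℕ => ∫ x : ℝ in (-1 : ℝ)..1,
        (1 - x ^ 2) ^ n * ((-1 : ℝ) ^ k * (z * x) ^ (2 * k) / (2 * k).factorial))
      (∫ x : ℝ in (-1 : ℝ)..1, (1 - x ^ 2) ^ n * Real.cos (z * x)) := by
    refine hasSum_integral_of_dominated_convergence
      (fun k _ => |z| ^ (2 * k) / (2 * k).factorial) ?_ ?_ ?_ ?_ ?_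
    · intro k
      exact Continuous.aestronglyMeasurable (by fun_prop)
    · refine fun k => Filter.Eventually.of_forall fun x hx => ?_
      rw [Set.uIoc_of_le (by norm_num)] at hx
      have hx1 : |x| ≤ 1 := abs_le.2 ⟨hx.1.le, hx.2⟩
      have hx2 : x ^ 2 ≤ 1 := (sq_le_one_iff_abs_le_one x).2 hx1
      have hw : |1 - x ^ 2| ^ n ≤ 1 :=
        pow_le_one₀ (abs_nonneg _) (abs_le.2 ⟨by linarith, by nlinarith [sq_nonneg x]⟩)
      have hp : |x| ^ (2 * k) ≤ 1 := pow_le_one₀ (abs_nonneg _) hx1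
      rw [Real.norm_eq_abs, abs_mul, abs_div, abs_mul, abs_pow, abs_pow, abs_pow, abs_mul,
        abs_neg, abs_one, one_pow, one_mul, Nat.abs_cast, mul_pow]
      calc |1 - x ^ 2| ^ n * (|z| ^ (2 * k) * |x| ^ (2 * k) / (2 * k).factorial)
          ≤ 1 * (|z| ^ (2 * k) * 1 / (2 * k).factorial) := by gcongr
        _ = |z| ^ (2 * k) / (2 * k).factorial := by ring
    · refine Filter.Eventually.of_forall fun x _ => ?_
      exact (Real.summable_pow_div_factorial |z|).comp_injective
        (mul_right_injective₀ (two_ne_zero (α := ℕ)))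
    · exact intervalIntegrable_const
    · exact Filter.Eventually.of_forall fun x _ => (Real.hasSum_cos (z * x)).mul_left _
  convert h using 2 with k
  have hfun : (fun x : ℝ =>
      (1 - x ^ 2) ^ n * ((-1 : ℝ) ^ k * (z * x) ^ (2 * k) / (2 * k).factorial)) =
      fun x : ℝ => ((-1 : ℝ) ^ k * z ^ (2 * k) / (2 * k).factorial) *
        ((1 - x ^ 2) ^ n * x ^ (2 * k)) := by
    funext x
    rw [mul_pow]
    ring
  have hpos : (0 : ℝ) < Real.Gamma ((n : ℝ) + k + 3 / 2) := Real.Gamma_pos_of_pos (by positivity)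
  rw [hfun, intervalIntegral.integral_const_mul, integral_weight_mul_pow]
  field_simp

/-- Poisson's integral representation of `j_n`. -/
lemma sphericalBessel_eq_integral (n : ℕ) (z : ℝ) :
    2 * sphericalBessel n z = z ^ n / (2 ^ n * n.factorial) *
      ∫ x : ℝ in (-1 : ℝ)..1, (1 - x ^ 2) ^ n * Real.cos (z * x) := by
  rw [← (hasSum_integral_weight_mul_cos n z).tsum_eq, sphericalBessel, ← tsum_mul_left,
    ← tsum_mul_left]
  congr 1
  funext k
  have hpos : (0 : ℝ) < Real.Gamma ((n : ℝ) + k + 3 / 2) := Real.Gamma_pos_of_pos (by positivity)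
  rw [div_pow, pow_add, pow_add, pow_mul 2, show (2 : ℝ) ^ 2 = 4 by norm_num]
  field_simp

/-- For every `n ∈ ℕ` and every real `z`,
`∫_{−1}^{1} P_n(x) e^{izx} dx = 2 iⁿ j_n(z)`. -/
theorem integral_legendre_mul_exp (n : ℕ) (z : ℝ) :
    (∫ x : ℝ in (-1 : ℝ)..1, (legendreP n x : ℂ) * Complex.exp (Complex.I * z * x)) =
      2 * Complex.I ^ n * (sphericalBessel n z : ℂ) := by
  have hQ : (fun y : ℝ => (y ^ 2 - 1) ^ n) =
      fun y => ((Polynomial.X ^ 2 - 1 : Polynomial ℝ) ^ n).eval y := by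
    funext y
    simp
  have hL : (∫ x : ℝ in (-1 : ℝ)..1, (legendreP n x : ℂ) * Complex.exp (Complex.I * z * x)) =
      (1 / ((2 : ℂ) ^ n * n.factorial)) * ((-(Complex.I * z)) ^ n *
        ∫ x : ℝ in (-1 : ℝ)..1, (((x ^ 2 - 1) ^ n : ℝ) : ℂ) *
          Complex.exp (Complex.I * z * x)) := by
    rw [← integral_iterate_derivative_mul_exp n z le_rfl, ← intervalIntegral.integral_const_mul]
    congr 1
    funext x
    rw [legendreP, hQ, iteratedDeriv_polynomial_eval]
    push_cast
    ring
  have hsign : (∫ x : ℝ in (-1 : ℝ)..1, (((x ^ 2 - 1) ^ n : ℝ) : ℂ) *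
        Complex.exp (Complex.I * z * x)) = (-1) ^ n *
      ∫ x : ℝ in (-1 : ℝ)..1, (((1 - x ^ 2) ^ n : ℝ) : ℂ) * Complex.exp (Complex.I * z * x) := by
    rw [← intervalIntegral.integral_const_mul]
    congr 1
    funext x
    rw [show x ^ 2 - 1 = (-1) * (1 - x ^ 2) by ring, mul_pow]
    push_cast
    ring
  have hB : 2 * (sphericalBessel n z : ℂ) = z ^ n / (2 ^ n * n.factorial) *
      ((∫ x : ℝ in (-1 : ℝ)..1, (1 - x ^ 2) ^ n * Real.cos (z * x) : ℝ) : ℂ) := by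
    exact_mod_cast congrArg (fun r : ℝ => (r : ℂ)) (sphericalBessel_eq_integral n z)
  have hpow : (-(Complex.I * z)) ^ n * (-1) ^ n = Complex.I ^ n * (z : ℂ) ^ n := by
    rw [← mul_pow, ← mul_pow]
    ring
  rw [hL, hsign, integral_weight_mul_exp, mul_right_comm, hB, ← mul_assoc (_ ^ n) ((-1) ^ n), hpow]
  ring
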